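/- arXiv:2605.00390 — 2 statements merged into one kernel-verified Lean document; each statement's English description precedes it below -/
import Mathlib

section
/- Let V be a finite vertex set, let w : V × V → ℝ be a symmetric weight function, set s_i = Σ_{j ∈ V} w(i,j) for each i ∈ V and 2m = Σ_{i,j ∈ V} w(i,j), and assume m ≠ 0. Let L : V → ℕ be a labeling, let i ∈ V be a vertex forming a singleton community (i.e. L(j) ≠ L(i) for every j ≠ i), and let c ∈ ℕ with c ≠ L(i). Let C = { j ∈ V : j ≠ i and L(j) = c } and vol(C) = Σ_{j ∈ C} s_j, and let L' agree with L except that L'(i) = c. Then the modularity gain of moving i to community C is M(L') − M(L) = (1/m)·( Σ_{j ∈ C} w(i,j) − s_i·vol(C)/(2m) ). -/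
open Finset

/-- The modularity of a labeling `L` for a symmetric weight function `w` with total weight
`2m`: `M(L) = (1/(2m)) · Σ_{i,j} (w i j − s i · s j/(2m)) · [L i = L j]`, where
`s i = Σ_j w i j`. -/
noncomputable def modularity {V : Type*} [Fintype V] (w : V → V → ℝ) (m : ℝ)
    (L : V → ℕ) : ℝ :=
  (1 / (2 * m)) * ∑ i, ∑ j,
    (w i j - (∑ j', w i j') * (∑ j', w j j') / (2 * m)) * (if L i = L j then 1 else 0)

/-- Modularity gain of a local move: if vertex `i` forms a singleton community under `L` and
`c ≠ L i`, then moving `i` to the community `C = {j ≠ i | L j = c}` changes the modularity by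
`M(L') − M(L) = (1/m)·(Σ_{j ∈ C} w i j − s i · vol(C)/(2m))`, where `s i = Σ_j w i j` and
`vol(C) = Σ_{j ∈ C} s j`. -/
theorem modularity_gain {V : Type*} [Fintype V] [DecidableEq V] (w : V → V → ℝ)
    (hsymm : ∀ i j, w i j = w j i) (m : ℝ)
    (hm : 2 * m = ∑ i, ∑ j, w i j) (hm0 : m ≠ 0)
    (L : V → ℕ) (i : V) (hsingleton : ∀ j, j ≠ i → L j ≠ L i)
    (c : ℕ) (hc : c ≠ L i) :
    modularity w m (Function.update L i c) - modularity w m L =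
      (1 / m) * ((∑ j ∈ univ.filter fun j => j ≠ i ∧ L j = c, w i j) -
        (∑ j', w i j') * (∑ j ∈ univ.filter fun j => j ≠ i ∧ L j = c, ∑ j', w j j')
          / (2 * m)) := by
  have key : ∀ B : V → V → ℝ, (∀ a b, B a b = B b a) →
      (∑ a, ∑ b, B a b *
        (if Function.update L i c a = Function.update L i c b then (1 : ℝ) else 0)) -
      (∑ a, ∑ b, B a b * (if L a = L b then (1 : ℝ) else 0)) =
      2 * ∑ j ∈ univ.filter (fun j => j ≠ i ∧ L j = c), B i j := by
    intro B hB
    have hpt : ∀ a b, B a b *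
          (if Function.update L i c a = Function.update L i c b then (1 : ℝ) else 0) -
        B a b * (if L a = L b then (1 : ℝ) else 0) =
        (if a = i then (if b ≠ i ∧ L b = c then B i b else 0) else 0) +
        (if b = i then (if a ≠ i ∧ L a = c then B i a else 0) else 0) := by
      intro a b
      by_cases ha : a = i
      · subst ha
        by_cases hb : b = a
        · subst hb; simp
        · have h1 : ¬ L a = L b := fun h => hsingleton b hb h.symm
          simp [hb, h1, eq_comm]
      · by_cases hb : b = i
        · subst hb
          have h1 := hsingleton a ha
          simp [ha, h1, hB a b]
        · simp [ha, hb]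
    rw [← Finset.sum_sub_distrib]
    simp_rw [← Finset.sum_sub_distrib, hpt, Finset.sum_add_distrib]
    rw [Finset.sum_comm]
    simp only [Finset.sum_ite_eq', Finset.mem_univ, if_true]
    rw [Finset.sum_filter]
    ring
  have hk := key (fun a b => w a b - (∑ j', w a j') * (∑ j', w b j') / (2 * m))
    (fun a b => by simp only [hsymm a b, mul_comm])
  unfold modularity
  rw [← mul_sub, hk, Finset.sum_sub_distrib, ← Finset.sum_div, ← Finset.mul_sum]
  field_simp
end

section
/- Let V be a finite vertex set, let w : V × V → ℝ be a symmetric weight function, and let γ ∈ ℝ. For a labeling L : V → ℕ define the constant Potts energy E_γ(L) = −Σ_{i,j ∈ V} w(i,j)·[L(i) = L(j)] + γ·Σ_{i,j ∈ V} [L(i) = L(j)]. Let i ∈ V be a vertex forming a singleton community (i.e. L(j) ≠ L(i) for every j ≠ i), let c ∈ ℕ with c ≠ L(i), let C = { j ∈ V : j ≠ i and L(j) = c }, and let L' agree with L except that L'(i) = c. Then E_γ(L') − E_γ(L) = −2·( Σ_{j ∈ C} w(i,j) − γ·|C| ). Hence greedily decreasing the constant Potts energy by local moves is equivalent to greedily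 maximizing the label-propagation gain Σ_{j ∈ C} w(i,j) − γ·|C|. -/
open Finset

/-- The constant Potts energy with attractive interactions `w` and constant null model `γ`:
`E_γ(L) = −Σ_{i,j} w i j·[L i = L j] + γ·Σ_{i,j} [L i = L j]`. -/
noncomputable def cpmEnergy {V : Type*} [Fintype V] (w : V → V → ℝ) (γ : ℝ)
    (L : V → ℕ) : ℝ :=
  -(∑ i, ∑ j, w i j * (if L i = L j then 1 else 0)) +
    γ * ∑ i, ∑ j, (if L i = L j then (1 : ℝ) else 0)

/-- The label-propagation gain of moving vertex `i` to the community
`C = {j ≠ i | L j = c}`: `Σ_{j ∈ C} w i j − γ·|C|`. -/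
noncomputable def lpaGain {V : Type*} [Fintype V] [DecidableEq V] (w : V → V → ℝ) (γ : ℝ)
    (L : V → ℕ) (i : V) (c : ℕ) : ℝ :=
  (∑ j ∈ univ.filter fun j => j ≠ i ∧ L j = c, w i j) -
    γ * ((univ.filter fun j => j ≠ i ∧ L j = c).card : ℝ)

/-- Change of a symmetric label-agreement sum under moving a singleton vertex. -/
theorem agree_sum_update {V : Type*} [Fintype V] [DecidableEq V] (f : V → V → ℝ)
    (hsymm : ∀ i j, f i j = f j i)
    (L : V → ℕ) (i : V) (hs : ∀ j, j ≠ i → L j ≠ L i) (c : ℕ) :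
    (∑ a, ∑ b, f a b * (if Function.update L i c a = Function.update L i c b then 1 else 0)) =
      (∑ a, ∑ b, f a b * (if L a = L b then 1 else 0)) +
        2 * ∑ j ∈ univ.filter fun j => j ≠ i ∧ L j = c, f i j := by
  have key : ∀ a b, f a b *
      (if Function.update L i c a = Function.update L i c b then 1 else 0) =
      f a b * (if L a = L b then 1 else 0) +
      ((if a = i then (if b ≠ i ∧ L b = c then f i b else 0) else 0) +
       (if b = i then (if a ≠ i ∧ L a = c then f i a else 0) else 0)) := by
    intro a b
    by_cases ha : a = i
    · subst ha
      by_cases hb : b = a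
      · subst hb
        simp
      · have := hs b hb
        simp [Function.update_of_ne hb, hb, this.symm, eq_comm]
    · by_cases hb : b = i
      · subst hb
        have := hs a ha
        simp [Function.update_of_ne ha, ha, this, hsymm a b]
      · simp [Function.update_of_ne ha, Function.update_of_ne hb, ha, hb]
  simp only [key, Finset.sum_add_distrib]
  rw [Finset.sum_filter]
  have h1 : ∑ a, ∑ b, (if a = i then (if b ≠ i ∧ L b = c then f i b else 0) else 0) =
      ∑ b, (if b ≠ i ∧ L b = c then f i b else 0) := by
    rw [Finset.sum_comm]
    exact Finset.sum_congr rfl fun b _ => by rw [Finset.sum_ite_eq']; simp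
  have h2 : ∑ a, ∑ b, (if b = i then (if a ≠ i ∧ L a = c then f i a else 0) else 0) =
      ∑ b, (if b ≠ i ∧ L b = c then f i b else 0) :=
    Finset.sum_congr rfl fun b _ => by rw [Finset.sum_ite_eq']; simp
  rw [h1, h2]
  ring

/-- The energy identity. -/
theorem cpmEnergy_update {V : Type*} [Fintype V] [DecidableEq V] (w : V → V → ℝ)
    (hsymm : ∀ i j, w i j = w j i) (γ : ℝ)
    (L : V → ℕ) (i : V) (hs : ∀ j, j ≠ i → L j ≠ L i) (c : ℕ) :
    cpmEnergy w γ (Function.update L i c) - cpmEnergy w γ L = -2 * lpaGain w γ L i c := by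
  have h1 := agree_sum_update w hsymm L i hs c
  have h2 := agree_sum_update (fun _ _ => 1) (fun _ _ => rfl) L i hs c
  simp only [one_mul, Finset.sum_const, nsmul_eq_mul, mul_one] at h2
  unfold cpmEnergy lpaGain
  rw [h1, h2]
  ring

/-- Constant-Potts-model gain of a local move: if vertex `i` forms a singleton community under
`L` and `c ≠ L i`, then moving `i` to the community `C = {j ≠ i | L j = c}` changes the
constant Potts energy by `E_γ(L') − E_γ(L) = −2·(Σ_{j ∈ C} w i j − γ·|C|)`; hence greedily
decreasing the constant Potts energy by local moves is equivalent to greedily maximizing the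
label-propagation gain. -/
theorem cpmEnergy_gain {V : Type*} [Fintype V] [DecidableEq V] (w : V → V → ℝ)
    (hsymm : ∀ i j, w i j = w j i) (γ : ℝ)
    (L : V → ℕ) (i : V) (hsingleton : ∀ j, j ≠ i → L j ≠ L i)
    (c : ℕ) (hc : c ≠ L i) :
    (cpmEnergy w γ (Function.update L i c) - cpmEnergy w γ L = -2 * lpaGain w γ L i c) ∧
    (∀ c' : ℕ, c' ≠ L i →
      (cpmEnergy w γ (Function.update L i c) ≤ cpmEnergy w γ (Function.update L i c') ↔
        lpaGain w γ L i c' ≤ lpaGain w γ L i c)) := by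
  have h := cpmEnergy_update w hsymm γ L i hsingleton
  refine ⟨h c, fun c' _ => ?_⟩
  have h1 := h c
  have h2 := h c'
  constructor <;> intro h3 <;> linarith
end
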